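/- Let c_1,...,c_n be binary supermodular cost functions on [m] with c_i(∅)=0. Let τ_i be the minimax share of agent i and c* the minimum social cost over all complete allocations. Then c* ≤ ∑_{i=1}^n τ_i. -/

import Mathlib

/-- `X` is a partition of the chores `Fin m` into `n` bundles. -/
def IsPartition {n m : ℕ} (X : Fin n → Finset (Fin m)) : Prop :=
  (∀ i j : Fin n, i ≠ j → Disjoint (X i) (X j)) ∧
    Finset.univ.biUnion X = (Finset.univ : Finset (Fin m))

/-- Binary marginals for a nonnegative-integer-valued cost function. -/
def BinaryMarginals {m : ℕ} (c : Finset (Fin m) → ℕ) : Prop :=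
  ∀ (S : Finset (Fin m)) (a : Fin m), a ∉ S →
    c (insert a S) = c S ∨ c (insert a S) = c S + 1

/-- Supermodularity (increasing marginals), in addition form. -/
def Supermod {m : ℕ} (c : Finset (Fin m) → ℕ) : Prop :=
  ∀ (S T : Finset (Fin m)) (a : Fin m), S ⊆ T → a ∉ T →
    c (insert a S) + c T ≤ c (insert a T) + c S

/-!
For a normalized binary supermodular cost `c`, the function `S ↦ #S - c S` is the rank function of
a matroid, and a set has cost at most `t` exactly when deleting some `t` of its elements leaves an
independent set. If `n` bundles of cost at most `t` cover `T`, then each contributes at most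
`#T - c T + t` elements, so `#T ≤ n * (#T - c T + t)`; averaging this over the agents gives
`#T ≤ ∑ i, (#T - c i T + τ i)` for every `T`. This is the hypothesis of a matroid union theorem for
the monotone submodular functions `f i S = #S - c i S + τ i`. Starting from the family in which
every agent receives everything, delete elements for as long as the condition
`#T ≤ ∑ i, f i (X i ∩ T)` survives: by submodularity, an element held by two agents can always be
taken from one of them, so a minimal family is a partition `A`, and the condition at the whole set
says `∑ i, c i (A i) ≤ ∑ i, τ i`.
-/

section RadoCondition

open Finset Function

variable {ι α : Type*} [Fintype ι] [DecidableEq α] {f : ι → Finset α → ℤ} {X : ι → Finset α}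

/-- The Rado-type condition for a family of bundles `X` and set functions `f i`: no set `T` has more
elements than the `f i` jointly allow inside the traces `X i ∩ T`. The `f i` need not vanish at `∅`,
so a permitted deficiency can be absorbed into them as an additive constant. -/
def RadoCondition (f : ι → Finset α → ℤ) (X : ι → Finset α) : Prop :=
  ∀ T : Finset α, (#T : ℤ) ≤ ∑ i, f i (X i ∩ T)

lemma RadoCondition.exists_mem_of_not_update_erase [DecidableEq ι] (hX : RadoCondition f X)
    {i : ι} {e : α} (h : ¬ RadoCondition f (update X i ((X i).erase e))) :
    ∃ T, e ∈ T ∧ ∑ l, f l (update X i ((X i).erase e) l ∩ T) < #T := by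
  obtain ⟨T, hT⟩ : ∃ T : Finset α, ∑ l, f l (update X i ((X i).erase e) l ∩ T) < #T := by
    simpa only [RadoCondition, not_forall, not_le] using h
  refine ⟨T, ?_, hT⟩
  by_contra he
  have trace_eq (l : ι) : update X i ((X i).erase e) l ∩ T = X l ∩ T := by
    obtain rfl | hl := eq_or_ne l i
    · rw [update_self, erase_inter, erase_eq_of_notMem (fun h ↦ he (mem_inter.1 h).2)]
    · rw [update_of_ne hl]
  simp only [trace_eq] at hT
  exact (hX T).not_gt hT

lemma sum_inter_union_add_sum_inter_erase_le [DecidableEq ι] (hmono : ∀ i, Monotone (f i))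
    (hsub : ∀ i S T, f i (S ∪ T) + f i (S ∩ T) ≤ f i S + f i T)
    {i j : ι} (hij : i ≠ j) {e : α} {S T : Finset α} (heS : e ∈ S) (heT : e ∈ T) :
    ∑ l, f l (X l ∩ (S ∪ T)) + ∑ l, f l (X l ∩ (S ∩ T).erase e) ≤
      ∑ l, f l (update X i ((X i).erase e) l ∩ S) +
        ∑ l, f l (update X j ((X j).erase e) l ∩ T) := by
  simp only [← sum_add_distrib]
  refine sum_le_sum fun l _ ↦ ?_
  set Y := update X i ((X i).erase e) l
  set Z := update X j ((X j).erase e) l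
  have union_subset : X l ∩ (S ∪ T) ⊆ (Y ∩ S) ∪ (Z ∩ T) := by
    intro x
    grind
  have erase_subset : X l ∩ (S ∩ T).erase e ⊆ (Y ∩ S) ∩ (Z ∩ T) := by
    intro x
    grind
  exact (add_le_add (hmono l union_subset) (hmono l erase_subset)).trans (hsub l _ _)

lemma RadoCondition.update_erase_or_update_erase [DecidableEq ι] (hmono : ∀ i, Monotone (f i))
    (hsub : ∀ i S T, f i (S ∪ T) + f i (S ∩ T) ≤ f i S + f i T) (hX : RadoCondition f X)
    {i j : ι} (hij : i ≠ j) (e : α) :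
    RadoCondition f (update X i ((X i).erase e)) ∨
      RadoCondition f (update X j ((X j).erase e)) := by
  by_contra! ⟨hi, hj⟩
  obtain ⟨S, heS, hS⟩ := hX.exists_mem_of_not_update_erase hi
  obtain ⟨T, heT, hT⟩ := hX.exists_mem_of_not_update_erase hj
  have exchange := sum_inter_union_add_sum_inter_erase_le (X := X) hmono hsub hij heS heT
  have card_union := hX (S ∪ T)
  have card_erase := hX ((S ∩ T).erase e)
  have card_add : #(S ∪ T) + (#((S ∩ T).erase e) + 1) = #S + #T := by
    rw [card_erase_add_one (mem_inter.2 ⟨heS, heT⟩), card_union_add_card_inter]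
  -- Both violations are by at least one, so together they outweigh the single deleted element.
  omega

lemma biUnion_update_erase [DecidableEq ι] {i j : ι} (hij : i ≠ j) {e : α} (hej : e ∈ X j) :
    univ.biUnion (update X i ((X i).erase e)) = univ.biUnion X := by
  ext x
  simp only [mem_biUnion, mem_univ, true_and]
  constructor
  · rintro ⟨l, hl⟩
    refine ⟨l, ?_⟩
    grind
  · rintro ⟨l, hl⟩
    by_cases hx : x = e
    · exact ⟨j, by rwa [update_of_ne hij.symm, hx]⟩
    · refine ⟨l, ?_⟩
      grind

theorem exists_partition_card_le_sum [Nonempty ι] [Fintype α] (hmono : ∀ i, Monotone (f i))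
    (hsub : ∀ i S T, f i (S ∪ T) + f i (S ∩ T) ≤ f i S + f i T)
    (hcard : ∀ T : Finset α, (#T : ℤ) ≤ ∑ i, f i T) :
    ∃ A : ι → Finset α, Pairwise (Disjoint on A) ∧ univ.biUnion A = univ ∧
      (Fintype.card α : ℤ) ≤ ∑ i, f i (A i) := by
  classical
  obtain ⟨A, ⟨hcover, hA⟩, hmin⟩ := exists_minimal_of_wellFoundedLT
    (fun X : ι → Finset α ↦ univ.biUnion X = univ ∧ RadoCondition f X)
    ⟨fun _ ↦ univ, by ext; simp, fun T ↦ by simpa only [univ_inter] using hcard T⟩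
  have not_rado_erase {i j : ι} (hij : i ≠ j) {e : α} (hei : e ∈ A i) (hej : e ∈ A j) :
      ¬ RadoCondition f (update A i ((A i).erase e)) := fun h ↦
    have lt : update A i ((A i).erase e) < A := update_lt_self_iff.2 (erase_ssubset hei)
    lt.not_ge (hmin ⟨(biUnion_update_erase hij hej).trans hcover, h⟩ lt.le)
  refine ⟨A, fun i j hij ↦ disjoint_left.2 fun e hei hej ↦ ?_, hcover, ?_⟩
  · exact (hA.update_erase_or_update_erase hmono hsub hij e).elim
      (not_rado_erase hij hei hej) (not_rado_erase hij.symm hej hei)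
  · simpa only [inter_univ, card_univ] using hA univ

end RadoCondition

section BudgetedRank

open Finset Function

variable {α : Type*} {c : Finset α → ℕ} {t : ℕ}

/-- The matroid rank `#S - c S` attached to a binary supermodular cost `c`, raised by a budget `t`:
an upper bound for the number of elements of `S` that a single bundle of cost at most `t` can hold.
It is integer-valued to avoid truncated subtraction. -/
def budgetedRank (c : Finset α → ℕ) (t : ℕ) (S : Finset α) : ℤ :=
  #S - c S + t

lemma monotone_budgetedRank (hrank : Monotone fun S ↦ (#S : ℤ) - c S) :
    Monotone (budgetedRank c t) :=
  hrank.add_const (t : ℤ)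

lemma le_sum_of_forall_le_card_mul {ι : Type*} [Fintype ι] [Nonempty ι] {a : ℤ} {b : ι → ℤ}
    (h : ∀ i, a ≤ Fintype.card ι * b i) : a ≤ ∑ i, b i := by
  have card_pos : (0 : ℤ) < Fintype.card ι := by exact_mod_cast Fintype.card_pos
  refine le_of_mul_le_mul_left ?_ card_pos
  calc (Fintype.card ι : ℤ) * a = ∑ _i : ι, a := by rw [sum_const, card_univ, nsmul_eq_mul]
    _ ≤ ∑ i, Fintype.card ι * b i := sum_le_sum fun i _ ↦ h i
    _ = Fintype.card ι * ∑ i, b i := (mul_sum ..).symm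

variable [DecidableEq α]

lemma budgetedRank_union_add_inter_le
    (hsuper : ∀ S T, c S + c T ≤ c (S ∪ T) + c (S ∩ T)) (S T : Finset α) :
    budgetedRank c t (S ∪ T) + budgetedRank c t (S ∩ T) ≤
      budgetedRank c t S + budgetedRank c t T := by
  have cost := hsuper S T
  have card := card_union_add_card_inter S T
  unfold budgetedRank
  omega

lemma card_inter_le_budgetedRank (hmono : Monotone c)
    (hrank : Monotone fun S ↦ (#S : ℤ) - c S) {B : Finset α} (hB : c B ≤ t) (T : Finset α) :
    (#(B ∩ T) : ℤ) ≤ budgetedRank c t T := by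
  have cost : c (B ∩ T) ≤ t := (hmono inter_subset_left).trans hB
  calc (#(B ∩ T) : ℤ) ≤ budgetedRank c t (B ∩ T) := by unfold budgetedRank; omega
    _ ≤ budgetedRank c t T := monotone_budgetedRank hrank inter_subset_right

lemma card_le_card_mul_budgetedRank {κ : Type*} [Fintype κ] (hmono : Monotone c)
    (hrank : Monotone fun S ↦ (#S : ℤ) - c S) {X : κ → Finset α} (hX : ∀ j, c (X j) ≤ t)
    {T : Finset α} (hT : T ⊆ univ.biUnion X) :
    (#T : ℤ) ≤ Fintype.card κ * budgetedRank c t T := by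
  have card_le : #T ≤ ∑ j, #(X j ∩ T) := by
    calc #T = #(univ.biUnion fun j ↦ X j ∩ T) := by rw [← biUnion_inter, inter_eq_right.2 hT]
      _ ≤ ∑ j, #(X j ∩ T) := card_biUnion_le
  calc (#T : ℤ) ≤ ∑ j, (#(X j ∩ T) : ℤ) := by exact_mod_cast card_le
    _ ≤ ∑ _j : κ, budgetedRank c t T :=
      sum_le_sum fun j _ ↦ card_inter_le_budgetedRank hmono hrank (hX j) T
    _ = Fintype.card κ * budgetedRank c t T := by
      rw [sum_const, card_univ, nsmul_eq_mul]

lemma sum_budgetedRank_eq {ι : Type*} [Fintype ι] [Fintype α] (c : ι → Finset α → ℕ) (t : ι → ℕ)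
    {A : ι → Finset α} (hdisj : Pairwise (Disjoint on A)) (hcover : univ.biUnion A = univ) :
    ∑ i, budgetedRank (c i) (t i) (A i) =
      Fintype.card α - ∑ i, (c i (A i) : ℤ) + ∑ i, (t i : ℤ) := by
  have card_sum : Fintype.card α = ∑ i, #(A i) := by
    rw [← card_univ, ← hcover, card_biUnion fun i _ j _ hij ↦ hdisj hij]
  simp only [budgetedRank, sum_add_distrib, sum_sub_distrib, card_sum, Nat.cast_sum]

theorem min_social_cost_le_sum_minimax_shares_general {ι : Type*} [Fintype ι] [Nonempty ι]
    [Fintype α] {c : ι → Finset α → ℕ} (hmono : ∀ i, Monotone (c i))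
    (hrank : ∀ i, Monotone fun S ↦ (#S : ℤ) - c i S)
    (hsuper : ∀ i S T, c i S + c i T ≤ c i (S ∪ T) + c i (S ∩ T)) {t : ι → ℕ}
    (ht : ∀ i, ∃ X : ι → Finset α, univ.biUnion X = univ ∧ ∀ j, c i (X j) ≤ t i) :
    ∃ A : ι → Finset α, Pairwise (Disjoint on A) ∧ univ.biUnion A = univ ∧
      ∑ i, c i (A i) ≤ ∑ i, t i := by
  have card_le (T : Finset α) : (#T : ℤ) ≤ ∑ i, budgetedRank (c i) (t i) T := by
    refine le_sum_of_forall_le_card_mul fun i ↦ ?_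
    obtain ⟨X, hcover, hX⟩ := ht i
    exact card_le_card_mul_budgetedRank (hmono i) (hrank i) hX (hcover ▸ subset_univ T)
  obtain ⟨A, hdisj, hcover, hA⟩ := exists_partition_card_le_sum
    (fun i ↦ monotone_budgetedRank (hrank i))
    (fun i ↦ budgetedRank_union_add_inter_le (hsuper i)) card_le
  refine ⟨A, hdisj, hcover, ?_⟩
  rw [sum_budgetedRank_eq c t hdisj hcover] at hA
  zify
  linarith

end BudgetedRank

section Marginals

open Finset

variable {m : ℕ} {c : Finset (Fin m) → ℕ}

lemma BinaryMarginals.monotone (h : BinaryMarginals c) : Monotone c :=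
  monotone_iff_forall_le_insert.2 fun S a ha ↦ by
    rcases h S a ha with h | h <;> omega

lemma BinaryMarginals.monotone_card_sub (h : BinaryMarginals c) :
    Monotone fun S ↦ (#S : ℤ) - c S :=
  monotone_iff_forall_le_insert.2 fun S a ha ↦ by
    rw [card_insert_of_notMem ha]
    rcases h S a ha with h | h <;> omega

lemma Supermod.union_add_le_union_add (h : Supermod c) {S T : Finset (Fin m)} (hST : S ⊆ T)
    (D : Finset (Fin m)) (hD : Disjoint D T) : c (D ∪ S) + c T ≤ c (D ∪ T) + c S := by
  induction D using Finset.induction_on with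
  | empty => rw [empty_union, empty_union, add_comm]
  | insert a D haD ih =>
    obtain ⟨haT, hDT⟩ := disjoint_insert_left.1 hD
    have marginal := h (D ∪ S) (D ∪ T) a (union_subset_union_right hST)
      (notMem_union.2 ⟨haD, haT⟩)
    have base := ih hDT
    rw [insert_union, insert_union]
    omega

lemma Supermod.add_le_union_add_inter (h : Supermod c) (S T : Finset (Fin m)) :
    c S + c T ≤ c (S ∪ T) + c (S ∩ T) := by
  simpa only [sdiff_union_inter, sdiff_union_self_eq_union] using
    h.union_add_le_union_add (inter_subset_right (s₁ := S)) (S \ T) sdiff_disjoint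

end Marginals

/-- for binary supermodular costs, the minimum social cost `c*` is at most
the sum of the agents' minimax shares. -/
theorem min_social_cost_le_sum_minimax_shares (n m : ℕ) (hn : 1 ≤ n)
    (c : Fin n → Finset (Fin m) → ℕ)
    (hmarg : ∀ i, BinaryMarginals (c i)) (hsuper : ∀ i, Supermod (c i))
    (h0 : ∀ i, c i ∅ = 0)
    (τ : Fin n → ℕ)
    (hτ : ∀ i, IsLeast {t : ℕ | ∃ X : Fin n → Finset (Fin m), IsPartition X ∧
        IsGreatest (Set.range fun j => c i (X j)) t} (τ i))
    (cstar : ℕ)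
    (hcstar : IsLeast {s : ℕ | ∃ A : Fin n → Finset (Fin m), IsPartition A ∧
        s = ∑ i, c i (A i)} cstar) :
    cstar ≤ ∑ i, τ i := by
  have : Nonempty (Fin n) := ⟨⟨0, hn⟩⟩
  obtain ⟨A, hdisj, hcover, hA⟩ := min_social_cost_le_sum_minimax_shares_general
    (fun i ↦ (hmarg i).monotone) (fun i ↦ (hmarg i).monotone_card_sub)
    (fun i ↦ (hsuper i).add_le_union_add_inter)
    fun i ↦ let ⟨X, hX, hmax⟩ := (hτ i).1; ⟨X, hX.2, fun j ↦ hmax.2 ⟨j, rfl⟩⟩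
  exact (hcstar.2 ⟨A, ⟨fun _ _ hij ↦ hdisj hij, hcover⟩, rfl⟩).trans hA
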